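/- Any spi-logic axiomatised by sp-implications of the form ◇_{R₁}⋯◇_{Rₙ} p → ◇_{R₀} p (n ≥ 0, R₀,…,Rₙ ∈ 𝓡, p a propositional variable) is complex, and hence complete. In particular, the spi-logics axiomatised by {p → ◇p}, by {◇◇p → ◇p}, and by Ec_qo = {p → ◇p, ◇◇p → ◇p} are complex and complete. -/

import Mathlib

/-- Strictly positive modal formulas over a signature `Sig`:
propositional variables, `⊤`, conjunction, and a diamond `◇_r` for each `r : Sig`. -/
inductive SP (Sig : Type) : Type
  | var : ℕ → SP Sig
  | top : SP Sig
  | and : SP Sig → SP Sig → SP Sig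
  | dia : Sig → SP Sig → SP Sig

/-- An sp-implication `σ → τ` is a pair of sp-formulas. -/
abbrev SPImp (Sig : Type) := SP Sig × SP Sig

/-- A SLO of signature `Sig`: a meet-semilattice with a greatest element,
equipped with a monotone unary operator for each element of the signature. -/
structure SLO (Sig : Type) where
  carrier : Type
  [instInf : SemilatticeInf carrier]
  [instTop : OrderTop carrier]
  dia : Sig → carrier → carrier
  mono : ∀ r : Sig, Monotone (dia r)

attribute [instance] SLO.instInf SLO.instTop

namespace SLO

variable {Sig : Type}

/-- Evaluation of an sp-formula in a SLO under a valuation of the variables. -/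
def eval (A : SLO Sig) (v : ℕ → A.carrier) : SP Sig → A.carrier
  | .var n => v n
  | .top => ⊤
  | .and φ ψ => eval A v φ ⊓ eval A v ψ
  | .dia r φ => A.dia r (eval A v φ)

/-- A SLO validates an sp-implication `σ → τ` if under every valuation
the value of `σ` is below the value of `τ`. -/
def Valid (A : SLO Sig) (ι : SPImp Sig) : Prop :=
  ∀ v : ℕ → A.carrier, eval A v ι.1 ≤ eval A v ι.2

/-- A SLO validates a set of sp-implications. -/
def ValidSet (A : SLO Sig) (Ax : Set (SPImp Sig)) : Prop :=
  ∀ ι ∈ Ax, Valid A ι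

end SLO

/-- A Kripke frame: a nonempty type of worlds with a binary accessibility
relation for each element of the signature. -/
structure KFrame (Sig : Type) where
  world : Type
  [instNonempty : Nonempty world]
  rel : Sig → world → world → Prop

attribute [instance] KFrame.instNonempty

namespace KFrame

variable {Sig : Type}

/-- Truth of an sp-formula at a world of a Kripke model `(F, v)`. -/
def truth (F : KFrame Sig) (v : ℕ → Set F.world) : SP Sig → F.world → Prop
  | .var n, w => w ∈ v n
  | .top, _ => True
  | .and φ ψ, w => truth F v φ w ∧ truth F v ψ w
  | .dia r φ, w => ∃ u, F.rel r w u ∧ truth F v φ u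

/-- A frame validates an sp-implication `σ → τ` if in every Kripke model on it,
at every world, truth of `σ` implies truth of `τ`. -/
def Valid (F : KFrame Sig) (ι : SPImp Sig) : Prop :=
  ∀ (v : ℕ → Set F.world) (w : F.world), truth F v ι.1 w → truth F v ι.2 w

/-- A frame validates a set of sp-implications. -/
def ValidSet (F : KFrame Sig) (Ax : Set (SPImp Sig)) : Prop :=
  ∀ ι ∈ Ax, Valid F ι

/-- The complex algebra `F*` of a frame, as a SLO: all subsets of the worlds,
with intersection as meet, the whole set as `⊤`, and
`◇_r X = {w | ∃ u ∈ X, rel r w u}`. -/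
def cmpl (F : KFrame Sig) : SLO Sig where
  carrier := Set F.world
  dia r X := {w | ∃ u ∈ X, F.rel r w u}
  mono r := by
    intro X Y hXY w hw
    obtain ⟨u, hu, hr⟩ := hw
    exact ⟨u, hXY hu, hr⟩

end KFrame

/-- An sp-embedding between SLOs: an injective map preserving `⊤`,
binary meets, and each operator. -/
def IsSpEmbedding {Sig : Type} (A B : SLO Sig) (η : A.carrier → B.carrier) : Prop :=
  Function.Injective η ∧ η ⊤ = ⊤ ∧
    (∀ a b : A.carrier, η (a ⊓ b) = η a ⊓ η b) ∧
    ∀ (r : Sig) (a : A.carrier), η (A.dia r a) = B.dia r (η a)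

/-- `Ax ⊨_Kr ι`: every frame validating every member of `Ax` validates `ι`. -/
def KrCons {Sig : Type} (Ax : Set (SPImp Sig)) (ι : SPImp Sig) : Prop :=
  ∀ F : KFrame Sig, F.ValidSet Ax → F.Valid ι

/-- `Ax ⊨_SLO ι`: every SLO validating every member of `Ax` validates `ι`. -/
def SLOCons {Sig : Type} (Ax : Set (SPImp Sig)) (ι : SPImp Sig) : Prop :=
  ∀ A : SLO Sig, A.ValidSet Ax → A.Valid ι

/-- The spi-logic axiomatised by `Ax` is complete:
`Ax ⊨_Kr ι` iff `Ax ⊨_SLO ι` for every sp-implication `ι`. -/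
def IsCompleteLogic {Sig : Type} (Ax : Set (SPImp Sig)) : Prop :=
  ∀ ι : SPImp Sig, KrCons Ax ι ↔ SLOCons Ax ι

/-- The spi-logic axiomatised by `Ax` is complex: every SLO validating every
member of `Ax` sp-embeds into the complex algebra of some frame validating
every member of `Ax`. -/
def IsComplexLogic {Sig : Type} (Ax : Set (SPImp Sig)) : Prop :=
  ∀ A : SLO Sig, A.ValidSet Ax →
    ∃ F : KFrame Sig, F.ValidSet Ax ∧
      ∃ η : A.carrier → (KFrame.cmpl F).carrier, IsSpEmbedding A (KFrame.cmpl F) η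

/-- The unimodal diamond. -/
def SP.d (φ : SP Unit) : SP Unit := SP.dia () φ

/-- `p → ◇p` (reflexivity). -/
def e_refl : SPImp Unit := (SP.var 0, (SP.var 0).d)

/-- `◇◇p → ◇p` (transitivity). -/
def e_trans : SPImp Unit := (((SP.var 0).d).d, (SP.var 0).d)

/-- `q ∧ ◇p → ◇(p ∧ ◇q)` (symmetry). -/
def e_sym : SPImp Unit :=
  ((SP.var 1).and ((SP.var 0).d), ((SP.var 0).and ((SP.var 1).d)).d)

/-- `diaList [R₁, …, Rₙ] φ = ◇_{R₁} ⋯ ◇_{Rₙ} φ`. -/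
def diaList {Sig : Type} : List Sig → SP Sig → SP Sig
  | [], φ => φ
  | r :: L, φ => SP.dia r (diaList L φ)

/-!
Turn a SLO `A` into a frame on its own elements, letting `w` see `u` along `R` when `w ≤ ◇_R u`.
By monotonicity of the diamonds, `a ↦ {w | w ≤ a}` is always an sp-embedding of `A` into the complex
algebra of this frame, so only the axioms have to be transferred from `A` to the frame. If
`◇_{R₁}⋯◇_{Rₙ} p` is true at `w`, the path witnessing it ends in some `u` with `p` true at `u` and
`w ≤ ◇_{R₁}⋯◇_{Rₙ} u`. The axiom in `A` then gives `w ≤ ◇_{R₀} u`, that is, `w` sees `u`.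
The same works when the conclusion is a longer chain `◇_{S₀}⋯◇_{Sₘ} p`: the path runs through the
elements `◇_{S₁}⋯◇_{Sₘ} u`, `◇_{S₂}⋯◇_{Sₘ} u`, …, `u`.
-/

namespace KFrame

variable {Sig : Type} (F : KFrame Sig)

theorem eval_cmpl (v : ℕ → Set F.world) (φ : SP Sig) :
    F.cmpl.eval v φ = {w | F.truth v φ w} := by
  induction φ with
  | var n => rfl
  | top => rfl
  | and φ ψ hφ hψ => simp only [SLO.eval, hφ, hψ]; rfl
  | dia r φ hφ =>
    simp only [SLO.eval, hφ]
    exact Set.ext fun _ => exists_congr fun _ => and_comm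

theorem cmpl_valid_iff {ι : SPImp Sig} : F.cmpl.Valid ι ↔ F.Valid ι :=
  forall_congr' fun v => Iff.of_eq (congrArg₂ (· ≤ ·) (F.eval_cmpl v ι.1) (F.eval_cmpl v ι.2))

theorem cmpl_validSet_iff {Ax : Set (SPImp Sig)} : F.cmpl.ValidSet Ax ↔ F.ValidSet Ax :=
  forall₂_congr fun _ _ => F.cmpl_valid_iff

end KFrame

namespace IsSpEmbedding

variable {Sig : Type} {A B : SLO Sig} {η : A.carrier → B.carrier}

theorem map_eval (hη : IsSpEmbedding A B η) (v : ℕ → A.carrier) (φ : SP Sig) :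
    η (A.eval v φ) = B.eval (η ∘ v) φ := by
  obtain ⟨-, map_top, map_inf, map_dia⟩ := hη
  induction φ with
  | var n => rfl
  | top => exact map_top
  | and φ ψ hφ hψ => simp only [SLO.eval, map_inf, hφ, hψ]
  | dia r φ hφ => simp only [SLO.eval, map_dia, hφ]

theorem le_iff_le (hη : IsSpEmbedding A B η) {a b : A.carrier} : η a ≤ η b ↔ a ≤ b := by
  rw [← inf_eq_left, ← inf_eq_left, ← hη.2.2.1, hη.1.eq_iff]

theorem valid (hη : IsSpEmbedding A B η) {ι : SPImp Sig} (hι : B.Valid ι) : A.Valid ι := by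
  intro v
  rw [← hη.le_iff_le, hη.map_eval, hη.map_eval]
  exact hι (η ∘ v)

end IsSpEmbedding

theorem SLOCons.krCons {Sig : Type} {Ax : Set (SPImp Sig)} {ι : SPImp Sig} (h : SLOCons Ax ι) :
    KrCons Ax ι :=
  fun F hF => F.cmpl_valid_iff.1 (h F.cmpl (F.cmpl_validSet_iff.2 hF))

theorem IsComplexLogic.isCompleteLogic {Sig : Type} {Ax : Set (SPImp Sig)}
    (h : IsComplexLogic Ax) : IsCompleteLogic Ax := by
  refine fun ι => ⟨fun hKr A hA => ?_, SLOCons.krCons⟩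
  obtain ⟨F, hF, η, hη⟩ := h A hA
  exact hη.valid (F.cmpl_valid_iff.2 (hKr F hF))

namespace SLO

variable {Sig : Type} (A : SLO Sig)

/-- The frame into whose complex algebra `A` is embedded: its worlds are the elements of `A`,
and `w` sees `u` along `r` when `w ≤ ◇_r u`. -/
def elementFrame : KFrame Sig where
  world := A.carrier
  instNonempty := ⟨⊤⟩
  rel r w u := w ≤ A.dia r u

theorem isSpEmbedding_Iic : IsSpEmbedding A A.elementFrame.cmpl (Set.Iic : _ → Set A.carrier) := by
  refine ⟨Set.Iic_injective, Set.Iic_top, fun _ _ => Set.Iic_inter_Iic.symm, fun r a =>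
    Set.ext fun w => ⟨fun hw => ⟨a, le_refl a, hw⟩, ?_⟩⟩
  rintro ⟨u, hua, hwu⟩
  exact le_trans hwu (A.mono r hua)

variable {A} {v : ℕ → Set A.carrier} {p : ℕ} {w : A.carrier}

theorem exists_le_eval_of_truth_diaList {L : List Sig}
    (hw : A.elementFrame.truth v (diaList L (.var p)) w) :
    ∃ u ∈ v p, w ≤ A.eval (fun _ => u) (diaList L (.var p)) := by
  induction L generalizing w with
  | nil => exact ⟨w, hw, le_rfl⟩
  | cons r L ih =>
    obtain ⟨x, hwx, hx⟩ := hw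
    obtain ⟨u, hu, hxu⟩ := ih hx
    exact ⟨u, hu, le_trans hwx (A.mono r hxu)⟩

-- This fails for the empty chain: `v p` need not be a lower set, so `w ≤ u` and `u ∈ v p` do not
-- give `w ∈ v p`.
theorem truth_diaList_cons_of_le_eval {r : Sig} {L : List Sig} {u : A.carrier} (hu : u ∈ v p)
    (hw : w ≤ A.eval (fun _ => u) (diaList (r :: L) (.var p))) :
    A.elementFrame.truth v (diaList (r :: L) (.var p)) w := by
  induction L generalizing r w with
  | nil => exact ⟨u, hw, hu⟩
  | cons s L ih => exact ⟨A.eval (fun _ => u) (diaList (s :: L) (.var p)), hw, ih le_rfl⟩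

end SLO

/-- The sp-implications `◇_{R₁}⋯◇_{Rₙ} p → ◇_{S₀}⋯◇_{Sₘ} p` with `n, m ≥ 0`, whose premise may be
the bare variable `p` but whose conclusion has at least one diamond. -/
def IsDiaChainImp {Sig : Type} (ι : SPImp Sig) : Prop :=
  ∃ (L : List Sig) (s : Sig) (M : List Sig) (p : ℕ),
    ι = (diaList L (.var p), diaList (s :: M) (.var p))

theorem isDiaChainImp_e_refl : IsDiaChainImp e_refl := ⟨[], (), [], 0, rfl⟩

theorem isDiaChainImp_e_trans : IsDiaChainImp e_trans := ⟨[(), ()], (), [], 0, rfl⟩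

theorem IsDiaChainImp.elementFrame_valid {Sig : Type} {A : SLO Sig} {ι : SPImp Sig}
    (hι : IsDiaChainImp ι) (hA : A.Valid ι) : A.elementFrame.Valid ι := by
  obtain ⟨L, s, M, p, rfl⟩ := hι
  intro v w hw
  obtain ⟨u, hu, hwu⟩ := SLO.exists_le_eval_of_truth_diaList hw
  exact SLO.truth_diaList_cons_of_le_eval hu (hwu.trans (hA fun _ => u))

theorem isComplexLogic_of_isDiaChainImp {Sig : Type} {Ax : Set (SPImp Sig)}
    (hAx : ∀ ι ∈ Ax, IsDiaChainImp ι) : IsComplexLogic Ax :=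
  fun A hA => ⟨A.elementFrame, fun ι hι => (hAx ι hι).elementFrame_valid (hA ι hι),
    _, A.isSpEmbedding_Iic⟩

theorem stmt3_general {Sig : Type} {Ax : Set (SPImp Sig)} (hAx : ∀ ι ∈ Ax, IsDiaChainImp ι) :
    IsComplexLogic Ax ∧ IsCompleteLogic Ax :=
  have h := isComplexLogic_of_isDiaChainImp hAx
  ⟨h, h.isCompleteLogic⟩

/-- Any spi-logic axiomatised by sp-implications of the form
`◇_{R₁}⋯◇_{Rₙ} p → ◇_{R₀} p` (n ≥ 0) is complex, and hence complete.
In particular, the spi-logics axiomatised by `{p → ◇p}`, by `{◇◇p → ◇p}`,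
and by `Ec_qo = {p → ◇p, ◇◇p → ◇p}` are complex and complete. -/
theorem stmt3 :
    (∀ (Sig : Type) (Ax : Set (SPImp Sig)),
        (∀ ι ∈ Ax, ∃ (L : List Sig) (r₀ : Sig) (p : ℕ),
            ι = (diaList L (SP.var p), SP.dia r₀ (SP.var p))) →
        IsComplexLogic Ax ∧ IsCompleteLogic Ax) ∧
    (IsComplexLogic ({e_refl} : Set (SPImp Unit)) ∧
      IsCompleteLogic ({e_refl} : Set (SPImp Unit))) ∧
    (IsComplexLogic ({e_trans} : Set (SPImp Unit)) ∧
      IsCompleteLogic ({e_trans} : Set (SPImp Unit))) ∧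
    (IsComplexLogic ({e_refl, e_trans} : Set (SPImp Unit)) ∧
      IsCompleteLogic ({e_refl, e_trans} : Set (SPImp Unit))) :=
  ⟨fun _ _ hAx => stmt3_general fun ι hι => let ⟨L, r₀, p, h⟩ := hAx ι hι; ⟨L, r₀, [], p, h⟩,
    stmt3_general (by simp [isDiaChainImp_e_refl]),
    stmt3_general (by simp [isDiaChainImp_e_trans]),
    stmt3_general (by simp [isDiaChainImp_e_refl, isDiaChainImp_e_trans])⟩
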